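/- Let m ≥ 2n ≥ 2 and let U be an m×m Haar distributed unitary matrix with upper-left n×n corner A. Then the distribution of A is absolutely continuous with respect to Lebesgue measure λ_n on the space of n×n complex matrices (identified with ℝ^{2n²}), with density proportional to det(1 - A*A)^{m-2n} on the set of contractions {A : ‖A‖ ≤ 1} and zero elsewhere; i.e., there is a constant C(n,m) > 0 such that the law of A is C(n,m) det(1-A*A)^{m-2n} 1_{‖A‖≤1} dλ_n(A). -/

import Mathlib

open MeasureTheory Filter Topology Matrix
open scoped ENNReal NNReal ComplexOrder

noncomputable section

instance matMS (k : ℕ) : MeasurableSpace (Matrix (Fin k) (Fin k) ℂ) :=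
  MeasurableSpace.pi

/-- The `n × n` upper-left corner of an `m × m` matrix. -/
def truncation (m n : ℕ) (U : Matrix (Fin m) (Fin m) ℂ) : Matrix (Fin n) (Fin n) ℂ :=
  Matrix.of fun i j => if h : (i : ℕ) < m ∧ (j : ℕ) < m then U ⟨i, h.1⟩ ⟨j, h.2⟩ else 0

/-- Lebesgue measure on the space of `n × n` complex matrices (identified
with `ℝ^{2n²}`). -/
def lebesgueMatrix (n : ℕ) : Measure (Matrix (Fin n) (Fin n) ℂ) :=
  Measure.pi fun _ : Fin n => Measure.pi fun _ : Fin n => (volume : Measure ℂ)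

/-!
Let `G` be an `m × n` matrix distributed according to Lebesgue measure weighted by a function of
`S = GᴴG`; the weight serves only to make the total mass finite. Since this measure is invariant
under left multiplication by unitary matrices, the isometry `G S^(-1/2)` has, up to normalization,
the law of `n` columns of a Haar unitary. The `p × n` corner therefore has the law of
`A₀ S^(-1/2)`, where `G` splits into `p` rows `A₀` and the remaining rows `B`, so that
`S = A₀ᴴA₀ + BᴴB`.

The law of `BᴴB` is determined up to a constant by its behaviour under the congruences
`H ↦ TᴴHT`, because these act transitively on positive definite matrices: for `k` rows it has
density proportional to `det(H)^(k - n)` there. Hence `(A₀, S)` has density proportional to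
`det(S - A₀ᴴA₀)^(m - p - n)`, and the substitution `A₀ = A S^(1/2)` turns this into a function of
`S` times `det(1 - AᴴA)^(m - p - n)`.
-/

section Instances

variable {m n : Type*}

instance (priority := low) matrixMeasurableSpace : MeasurableSpace (Matrix m n ℂ) :=
  MeasurableSpace.pi

variable [Finite m] [Finite n]

instance matrixBorelSpace : BorelSpace (Matrix m n ℂ) :=
  inferInstanceAs (BorelSpace (m → n → ℂ))

instance matrixSecondCountableTopology : SecondCountableTopology (Matrix m n ℂ) :=
  inferInstanceAs (SecondCountableTopology (m → n → ℂ))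

instance matrixFiniteDimensionalReal : FiniteDimensional ℝ (Matrix m n ℂ) :=
  Module.Finite.trans ℂ _

instance unitaryGroupSecondCountableTopology {n : Type*} [Fintype n] [DecidableEq n] :
    SecondCountableTopology (Matrix.unitaryGroup n ℂ) :=
  Topology.IsEmbedding.subtypeVal.secondCountableTopology

end Instances

section Measurability

variable {k l m α : Type*} [Finite k] [Fintype l] [Finite m] [MeasurableSpace α]

@[fun_prop]
lemma measurable_matrix_mul {f : α → Matrix k l ℂ} {g : α → Matrix l m ℂ}
    (hf : Measurable f) (hg : Measurable g) : Measurable fun a => f a * g a :=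
  (by fun_prop : Continuous fun p : Matrix k l ℂ × Matrix l m ℂ => p.1 * p.2).measurable.comp
    (hf.prodMk hg)

@[fun_prop]
lemma measurable_conjTranspose {f : α → Matrix k m ℂ} (hf : Measurable f) :
    Measurable fun a => (f a)ᴴ :=
  (by fun_prop : Continuous fun A : Matrix k m ℂ => Aᴴ).measurable.comp hf

@[fun_prop]
lemma measurable_submatrix {k' m' : Type*} [Finite k'] [Finite m'] {f : α → Matrix k m ℂ}
    (hf : Measurable f) (r : k' → k) (c : m' → m) :
    Measurable fun a => (f a).submatrix r c :=
  (by fun_prop : Continuous fun A : Matrix k m ℂ => A.submatrix r c).measurable.comp hf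

variable {n : Type*} [Fintype n] [DecidableEq n]

@[fun_prop]
lemma measurable_det {f : α → Matrix n n ℂ} (hf : Measurable f) :
    Measurable fun a => (f a).det :=
  (by fun_prop : Continuous fun A : Matrix n n ℂ => A.det).measurable.comp hf

@[fun_prop]
lemma measurable_matrix_inv {f : α → Matrix n n ℂ} (hf : Measurable f) :
    Measurable fun a => (f a)⁻¹ := by
  have h_adj : Measurable fun A : Matrix n n ℂ => A.adjugate :=
    (by fun_prop : Continuous fun A : Matrix n n ℂ => A.adjugate).measurable
  simp only [Matrix.inv_def, Ring.inverse_eq_inv']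
  exact (measurable_det hf).inv.smul (h_adj.comp hf)

open scoped MatrixOrder Matrix.Norms.L2Operator in
lemma measurable_matrix_sqrt : Measurable (CFC.sqrt : Matrix n n ℂ → Matrix n n ℂ) := by
  have h_closed : MeasurableSet {A : Matrix n n ℂ | 0 ≤ A} :=
    CStarAlgebra.isClosed_nonneg.measurableSet
  refine measurable_of_restrict_of_restrict_compl h_closed
    (continuousOn_iff_continuous_domRestrict.1 CFC.continuousOn_sqrt).measurable ?_
  convert measurable_const (a := (0 : Matrix n n ℂ)) using 2 with A
  exact CFC.sqrt_of_not_nonneg A.2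

end Measurability

section PositiveMatrices

variable {n : Type*} [Finite n]

lemma isClosed_setOf_posSemidef : IsClosed {H : Matrix n n ℂ | H.PosSemidef} := by
  classical
  cases nonempty_fintype n
  open scoped MatrixOrder Matrix.Norms.L2Operator in
  simpa only [Matrix.nonneg_iff_posSemidef] using
    CStarAlgebra.isClosed_nonneg (A := Matrix n n ℂ)

lemma measurableSet_setOf_posSemidef : MeasurableSet {H : Matrix n n ℂ | H.PosSemidef} :=
  isClosed_setOf_posSemidef.measurableSet

lemma posDef_iff_posSemidef_and_det_ne_zero {n : Type*} [Fintype n] [DecidableEq n]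
    {H : Matrix n n ℂ} :
    H.PosDef ↔ H.PosSemidef ∧ H.det ≠ 0 :=
  ⟨fun h => ⟨h.posSemidef, h.det_pos.ne'⟩, fun h => h.1.posDef_iff_det_ne_zero.2 h.2⟩

lemma measurableSet_setOf_posDef : MeasurableSet {H : Matrix n n ℂ | H.PosDef} := by
  classical
  cases nonempty_fintype n
  simp only [posDef_iff_posSemidef_and_det_ne_zero]
  exact measurableSet_setOf_posSemidef.inter
    (measurable_det measurable_id (measurableSet_singleton 0).compl)

end PositiveMatrices

section Lebesgue

/-- Lebesgue measure on the space of complex matrices with rows indexed by `m` and columns indexed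
by `n`, identified with the real vector space of their entries. -/
def matrixLebesgue (m n : Type*) [Fintype m] [Fintype n] : Measure (Matrix m n ℂ) :=
  Measure.pi fun _ : m => Measure.pi fun _ : n => (volume : Measure ℂ)

variable {m n : Type*} [Fintype m] [Fintype n]

instance : SigmaFinite (matrixLebesgue m n) :=
  inferInstanceAs (SigmaFinite (volume : Measure (m → n → ℂ)))

instance : (matrixLebesgue m n).IsAddHaarMeasure :=
  Measure.pi.isAddHaarMeasure fun _ : m => Measure.pi fun _ : n => (volume : Measure ℂ)

lemma det_mulRightLinearMap [DecidableEq n] (T : Matrix n n ℂ) :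
    LinearMap.det (mulRightLinearMap m ℂ T) = T.det ^ Fintype.card m := by
  classical
  have h_rows : mulRightLinearMap m ℂ T =
      (LinearMap.pi fun i : m => (Matrix.toLin' Tᵀ).comp (LinearMap.proj i) :
        (m → n → ℂ) →ₗ[ℂ] (m → n → ℂ)) := by
    refine LinearMap.ext fun G => ?_
    funext i j
    change (G * T) i j = (Matrix.toLin' Tᵀ) (G i) j
    simp [Matrix.mul_apply, Matrix.mulVec, dotProduct, mul_comm]
  rw [h_rows]
  exact (LinearMap.det_pi fun _ : m => Matrix.toLin' Tᵀ).trans (by simp)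

lemma det_mulLeftLinearMap [DecidableEq m] (T : Matrix m m ℂ) :
    LinearMap.det (mulLeftLinearMap n ℂ T) = T.det ^ Fintype.card n := by
  have h_conj := LinearMap.det_conj (mulRightLinearMap n ℂ Tᵀ) (transposeLinearEquiv n m ℂ ℂ)
  rw [det_mulRightLinearMap, det_transpose] at h_conj
  rw [← h_conj]
  congr 1
  exact LinearMap.ext fun G => by simp [transpose_mul]

lemma det_restrictScalars_complex {E : Type*} [AddCommGroup E] [Module ℂ E]
    [FiniteDimensional ℂ E] (L : E →ₗ[ℂ] E) :
    LinearMap.det (L.restrictScalars ℝ) = ‖LinearMap.det L‖ ^ 2 := by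
  rw [LinearMap.det_restrictScalars, Algebra.norm_complex_apply, Complex.normSq_eq_norm_sq]

open scoped Matrix.Norms.L2Operator in
lemma map_linearMap_matrixLebesgue (L : Matrix m n ℂ →ₗ[ℂ] Matrix m n ℂ)
    (hL : LinearMap.det L ≠ 0) :
    (matrixLebesgue m n).map L = (‖LinearMap.det L‖ₑ ^ 2)⁻¹ • matrixLebesgue m n := by
  classical
  have h_det := det_restrictScalars_complex L
  have h_map := Measure.map_linearMap_addHaar_eq_smul_addHaar (matrixLebesgue m n)
    (f := L.restrictScalars ℝ) (by rw [h_det]; positivity)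
  rw [h_det, abs_of_nonneg (by positivity), ENNReal.ofReal_inv_of_pos (by positivity),
    ENNReal.ofReal_pow (norm_nonneg _), ofReal_norm] at h_map
  exact h_map

lemma map_mul_right_matrixLebesgue [DecidableEq n] {T : Matrix n n ℂ} (hT : IsUnit T) :
    (matrixLebesgue m n).map (fun G => G * T) =
      (‖T.det‖ₑ ^ (2 * Fintype.card m))⁻¹ • matrixLebesgue m n := by
  have h_det := det_mulRightLinearMap (m := m) T
  have h_map := map_linearMap_matrixLebesgue (mulRightLinearMap m ℂ T)
    (by rw [h_det]; exact pow_ne_zero _ ((isUnit_iff_isUnit_det T).1 hT).ne_zero)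
  rwa [h_det, enorm_pow, ← pow_mul, mul_comm (Fintype.card m)] at h_map

lemma map_mul_left_matrixLebesgue [DecidableEq m] {T : Matrix m m ℂ} (hT : IsUnit T) :
    (matrixLebesgue m n).map (fun G => T * G) =
      (‖T.det‖ₑ ^ (2 * Fintype.card n))⁻¹ • matrixLebesgue m n := by
  have h_det := det_mulLeftLinearMap (n := n) T
  have h_map := map_linearMap_matrixLebesgue (mulLeftLinearMap n ℂ T)
    (by rw [h_det]; exact pow_ne_zero _ ((isUnit_iff_isUnit_det T).1 hT).ne_zero)
  rwa [h_det, enorm_pow, ← pow_mul, mul_comm (Fintype.card n)] at h_map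

end Lebesgue

section NullSets

variable {k n : Type*} [Fintype k] [Fintype n] [DecidableEq n]

lemma ae_isUnit_add_smul_one (A : Matrix n n ℂ) :
    ∀ᵐ t : ℝ, IsUnit (A + t • (1 : Matrix n n ℂ)) := by
  have h_roots : {z : ℂ | (-A).charpoly.IsRoot z}.Finite :=
    Polynomial.finite_setOfPred_isRoot (charpoly_monic (-A)).ne_zero
  have h_null := (h_roots.preimage Complex.ofReal_injective.injOn).measure_zero volume
  refine measure_mono_null (fun t ht => ?_) h_null
  have h_det : (A + t • (1 : Matrix n n ℂ)).det = 0 := by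
    simpa [isUnit_iff_isUnit_det] using ht
  rw [Set.mem_preimage, Set.mem_ofPred_eq, Polynomial.IsRoot, eval_charpoly, ← h_det]
  congr 1
  ext i j
  simp [Matrix.scalar_apply, Matrix.diagonal_apply, Matrix.one_apply, add_comm]

lemma measurableSet_setOf_isUnit : MeasurableSet {A : Matrix n n ℂ | IsUnit A} := by
  simp only [isUnit_iff_isUnit_det, isUnit_iff_ne_zero]
  exact measurable_det measurable_id (measurableSet_singleton 0).compl

open scoped Matrix.Norms.L2Operator in
lemma ae_isUnit_submatrix_matrixLebesgue (e : n ↪ k) :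
    ∀ᵐ G ∂matrixLebesgue k n, IsUnit (G.submatrix e id) := by
  classical
  let E : Matrix k n ℂ := (1 : Matrix k k ℂ).submatrix id e
  have h_E : E.submatrix e id = 1 := by
    ext i j
    simp [E, one_apply]
  refine ae_mem_of_ae_add_linearMap_mem (LinearMap.toSpanSingleton ℝ (Matrix k n ℂ) E) volume
    (matrixLebesgue k n) (s := {G : Matrix k n ℂ | IsUnit (G.submatrix e id)})
    (measurable_submatrix measurable_id e id measurableSet_setOf_isUnit) fun G => ?_
  filter_upwards [ae_isUnit_add_smul_one (G.submatrix e id)] with t ht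
  rwa [← h_E] at ht

lemma ae_isUnit_matrixLebesgue : ∀ᵐ T ∂matrixLebesgue n n, IsUnit T :=
  ae_isUnit_submatrix_matrixLebesgue (Function.Embedding.refl n)

lemma posDef_gram_of_isUnit_submatrix {G : Matrix k n ℂ} {e : n → k}
    (h : IsUnit (G.submatrix e id)) : (Gᴴ * G).PosDef := by
  refine PosDef.conjTranspose_mul_self G fun x y hxy => ?_
  refine mulVec_injective_of_isUnit h ?_
  funext i
  exact congrFun hxy (e i)

lemma ae_posDef_gram_matrixLebesgue {k n : Type*} [Fintype k] [Fintype n]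
    (h_card : Fintype.card n ≤ Fintype.card k) :
    ∀ᵐ G ∂matrixLebesgue k n, (Gᴴ * G).PosDef := by
  classical
  obtain ⟨e⟩ := Function.Embedding.nonempty_of_card_le h_card
  filter_upwards [ae_isUnit_submatrix_matrixLebesgue e] with G hG
  exact posDef_gram_of_isUnit_submatrix hG

end NullSets

section HermitianLebesgue

variable {n : Type*}

instance [Finite n] : LocallyCompactSpace (selfAdjoint.submodule ℝ (Matrix n n ℂ)) := by
  classical
  cases nonempty_fintype n
  open scoped Matrix.Norms.L2Operator in infer_instance

lemma measurableEmbedding_coe_hermitian [Finite n] : MeasurableEmbedding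
    (Subtype.val : selfAdjoint.submodule ℝ (Matrix n n ℂ) → Matrix n n ℂ) :=
  .subtype_coe (isClosed_eq (by fun_prop) continuous_id :
    IsClosed {H : Matrix n n ℂ | Hᴴ = H}).measurableSet

open scoped ComplexStarModule in
/-- The decomposition `A = H + iK` of a complex matrix into Hermitian matrices `H` and `K`. -/
def hermitianProdEquiv (n : Type*) :
    (selfAdjoint.submodule ℝ (Matrix n n ℂ) × selfAdjoint.submodule ℝ (Matrix n n ℂ)) ≃ₗ[ℝ]
      Matrix n n ℂ where
  toFun P := P.1 + Complex.I • P.2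
  map_add' P Q := by simp only [Prod.fst_add, Prod.snd_add, Submodule.coe_add]; module
  map_smul' t P := by simp [smul_comm Complex.I]
  invFun A := (ℜ A, ℑ A)
  left_inv P := by
    have h_re : ∀ H : selfAdjoint.submodule ℝ (Matrix n n ℂ), ℜ (H : Matrix n n ℂ) = H :=
      fun H => selfAdjoint.realPart_coe
    have h_im : ∀ H : selfAdjoint.submodule ℝ (Matrix n n ℂ), ℑ (H : Matrix n n ℂ) = 0 :=
      fun H => selfAdjoint.imaginaryPart_coe
    simp only [map_add, realPart_I_smul, imaginaryPart_I_smul, h_re, h_im, neg_zero]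
    exact Prod.ext (add_zero P.1) (zero_add P.2)
  right_inv A := realPart_add_I_smul_imaginaryPart A

lemma hermitianProdEquiv_apply
    (P : selfAdjoint.submodule ℝ (Matrix n n ℂ) × selfAdjoint.submodule ℝ (Matrix n n ℂ)) :
    hermitianProdEquiv n P = (P.1 : Matrix n n ℂ) + Complex.I • (P.2 : Matrix n n ℂ) :=
  rfl

variable [Fintype n]

/-- The congruence `H ↦ Tᴴ * H * T` as a real-linear endomorphism of the space of Hermitian
matrices. -/
def hermitianCongr (T : Matrix n n ℂ) :
    selfAdjoint.submodule ℝ (Matrix n n ℂ) →ₗ[ℝ] selfAdjoint.submodule ℝ (Matrix n n ℂ) :=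
  LinearMap.restrict ((mulLeftLinearMap n ℂ Tᴴ ∘ₗ mulRightLinearMap n ℂ T).restrictScalars ℝ)
    fun H (hH : H.IsHermitian) => show (Tᴴ * (H * T)).IsHermitian from
      Matrix.mul_assoc Tᴴ H T ▸ isHermitian_conjTranspose_mul_mul T hH

@[simp]
lemma coe_hermitianCongr (T : Matrix n n ℂ) (H : selfAdjoint.submodule ℝ (Matrix n n ℂ)) :
    (hermitianCongr T H : Matrix n n ℂ) = Tᴴ * H * T :=
  (Matrix.mul_assoc Tᴴ (H : Matrix n n ℂ) T).symm

lemma abs_det_hermitianCongr [DecidableEq n] (T : Matrix n n ℂ) :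
    |LinearMap.det (hermitianCongr T)| = ‖T.det‖ ^ (2 * Fintype.card n) := by
  have h_conj := LinearMap.det_conj ((hermitianCongr T).prodMap (hermitianCongr T))
    (hermitianProdEquiv n)
  have h_full : (hermitianProdEquiv n : _ →ₗ[ℝ] Matrix n n ℂ) ∘ₗ
        (hermitianCongr T).prodMap (hermitianCongr T) ∘ₗ
        ((hermitianProdEquiv n).symm : Matrix n n ℂ →ₗ[ℝ] _) =
      (mulLeftLinearMap n ℂ Tᴴ ∘ₗ mulRightLinearMap n ℂ T).restrictScalars ℝ := by
    refine LinearMap.ext fun A => ?_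
    obtain ⟨P, rfl⟩ := (hermitianProdEquiv n).surjective A
    simp only [LinearMap.comp_apply, LinearEquiv.coe_coe, LinearEquiv.symm_apply_apply]
    simp [hermitianProdEquiv_apply, Matrix.mul_add, Matrix.add_mul, Matrix.mul_assoc]
  rw [h_full, det_restrictScalars_complex, LinearMap.det_comp, det_mulRightLinearMap,
    det_mulLeftLinearMap, det_conjTranspose, LinearMap.det_prodMap, ← sq] at h_conj
  rw [← abs_of_nonneg (by positivity : 0 ≤ ‖T.det‖ ^ (2 * Fintype.card n)),
    ← sq_eq_sq_iff_abs_eq_abs, ← h_conj]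
  simp only [norm_mul, norm_pow, norm_star]
  ring

/-- A Lebesgue measure (with an arbitrary normalization) on the real vector space of Hermitian
matrices, regarded as a measure on the space of all matrices. -/
def hermitianLebesgue (n : Type*) [Fintype n] : Measure (Matrix n n ℂ) :=
  (Measure.addHaar : Measure (selfAdjoint.submodule ℝ (Matrix n n ℂ))).map Subtype.val

open scoped Matrix.Norms.L2Operator in
instance : SigmaFinite (hermitianLebesgue n) := by
  classical
  exact measurableEmbedding_coe_hermitian.sigmaFinite_map

variable [DecidableEq n]

open scoped Matrix.Norms.L2Operator in
lemma map_congr_hermitianLebesgue {T : Matrix n n ℂ} (hT : IsUnit T) :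
    (hermitianLebesgue n).map (fun H => Tᴴ * H * T) =
      (‖T.det‖ₑ ^ (2 * Fintype.card n))⁻¹ • hermitianLebesgue n := by
  have h_det_T : T.det ≠ 0 := ((isUnit_iff_isUnit_det T).1 hT).ne_zero
  have h_det := abs_det_hermitianCongr T
  have h_map := Measure.map_linearMap_addHaar_eq_smul_addHaar
    (Measure.addHaar : Measure (selfAdjoint.submodule ℝ (Matrix n n ℂ)))
    (f := hermitianCongr T) (by rw [← abs_ne_zero, h_det]; positivity)
  rw [abs_inv, h_det, ENNReal.ofReal_inv_of_pos (by positivity),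
    ENNReal.ofReal_pow (norm_nonneg _), ofReal_norm] at h_map
  rw [hermitianLebesgue, ← Measure.map_smul, ← h_map,
    Measure.map_map (by fun_prop) measurable_subtype_coe,
    Measure.map_map measurable_subtype_coe
      (hermitianCongr T).continuous_of_finiteDimensional.measurable]
  simp only [Function.comp_def, coe_hermitianCongr]

open scoped Matrix.Norms.L2Operator in
lemma ae_isUnit_hermitianLebesgue : ∀ᵐ H ∂hermitianLebesgue n, IsUnit H := by
  rw [hermitianLebesgue, ae_map_iff measurable_subtype_coe.aemeasurable measurableSet_setOf_isUnit]
  let I : selfAdjoint.submodule ℝ (Matrix n n ℂ) := ⟨1, isHermitian_one⟩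
  refine ae_mem_of_ae_add_linearMap_mem (LinearMap.toSpanSingleton ℝ _ I) volume _
    (measurable_subtype_coe measurableSet_setOf_isUnit) fun H => ?_
  filter_upwards [ae_isUnit_add_smul_one (H : Matrix n n ℂ)] with t ht using ht

open scoped MatrixOrder Matrix.Norms.L2Operator in
lemma posDef_of_norm_sub_one_lt_one {H : Matrix n n ℂ} (h_herm : H.IsHermitian)
    (h_norm : ‖H - 1‖ < 1) : H.PosDef := by
  have h_diff : IsSelfAdjoint (H - 1) := h_herm.sub isHermitian_one
  have h_psd : (H - 1 - -algebraMap ℝ (Matrix n n ℂ) ‖H - 1‖).PosSemidef :=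
    Matrix.le_iff.1 h_diff.neg_algebraMap_norm_le_self
  have h_pos : (algebraMap ℝ (Matrix n n ℂ) (1 - ‖H - 1‖)).PosDef := by
    rw [Algebra.algebraMap_eq_smul_one]
    exact PosDef.one.smul (sub_pos.2 h_norm)
  convert h_pos.add_posSemidef h_psd using 1
  rw [map_sub, map_one]
  abel

open scoped Matrix.Norms.L2Operator in
lemma hermitianLebesgue_setOf_posDef_ne_zero {n : Type*} [Fintype n] :
    hermitianLebesgue n {H | H.PosDef} ≠ 0 := by
  classical
  rw [hermitianLebesgue, Measure.map_apply measurable_subtype_coe measurableSet_setOf_posDef]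
  let I : selfAdjoint.submodule ℝ (Matrix n n ℂ) := ⟨1, isHermitian_one⟩
  refine ((Metric.measure_ball_pos _ I one_pos).trans_le (measure_mono fun H hH => ?_)).ne'
  rw [mem_ball_iff_norm] at hH
  exact posDef_of_norm_sub_one_lt_one H.2 hH

end HermitianLebesgue

section InverseSquareRoot

variable {n : Type*} [Fintype n] [DecidableEq n] {H T : Matrix n n ℂ}

lemma enorm_det_ne_zero (hT : IsUnit T) : ‖T.det‖ₑ ≠ 0 :=
  enorm_ne_zero.2 ((isUnit_iff_isUnit_det T).1 hT).ne_zero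

lemma enorm_det_conjTranspose (T : Matrix n n ℂ) : ‖Tᴴ.det‖ₑ = ‖T.det‖ₑ := by
  rw [det_conjTranspose, ← ofReal_norm, norm_star, ofReal_norm]

lemma enorm_det_inv (hT : IsUnit T) : ‖T⁻¹.det‖ₑ = ‖T.det‖ₑ⁻¹ := by
  rw [det_nonsing_inv, Ring.inverse_eq_inv', enorm_inv ((isUnit_iff_isUnit_det T).1 hT).ne_zero]

open scoped MatrixOrder in
/-- The inverse `H^(-1/2)` of the positive square root of a positive definite matrix `H`. -/
def invSqrt (H : Matrix n n ℂ) : Matrix n n ℂ :=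
  (CFC.sqrt H)⁻¹

@[fun_prop]
lemma measurable_invSqrt {α : Type*} [MeasurableSpace α] {f : α → Matrix n n ℂ}
    (hf : Measurable f) : Measurable fun a => invSqrt (f a) :=
  measurable_matrix_inv (measurable_matrix_sqrt.comp hf)

open scoped MatrixOrder in
@[simp]
lemma conjTranspose_invSqrt (H : Matrix n n ℂ) : (invSqrt H)ᴴ = invSqrt H := by
  rw [invSqrt, conjTranspose_nonsing_inv,
    (nonneg_iff_posSemidef.1 (CFC.sqrt_nonneg H)).isHermitian.eq]

open scoped MatrixOrder in
lemma invSqrt_mul_invSqrt (hH : H.PosDef) : invSqrt H * invSqrt H = H⁻¹ := by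
  rw [invSqrt, ← Matrix.mul_inv_rev,
    CFC.sqrt_mul_sqrt_self H (nonneg_iff_posSemidef.2 hH.posSemidef)]

lemma isUnit_invSqrt (hH : H.PosDef) : IsUnit (invSqrt H) := by
  refine isUnit_of_mul_isUnit_left (y := invSqrt H) ?_
  rw [invSqrt_mul_invSqrt hH]
  exact hH.inv.isUnit

lemma invSqrt_mul_mul_invSqrt (hH : H.PosDef) : invSqrt H * H * invSqrt H = 1 := by
  have h_comm : H * invSqrt H * invSqrt H = 1 := by
    rw [Matrix.mul_assoc, invSqrt_mul_invSqrt hH,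
      mul_nonsing_inv _ ((isUnit_iff_isUnit_det H).1 hH.isUnit)]
  rw [Matrix.mul_assoc]
  exact mul_eq_one_comm.1 h_comm

lemma enorm_det_invSqrt_sq (hH : H.PosDef) : ‖(invSqrt H).det‖ₑ ^ 2 = ‖H.det‖ₑ⁻¹ := by
  rw [← enorm_det_inv hH.isUnit, ← invSqrt_mul_invSqrt hH, det_mul, enorm_mul, sq]

end InverseSquareRoot

section CongruenceInvariance

lemma inv_eq_mul_inv_mul {a : ℝ≥0∞} (ha_zero : a ≠ 0) (ha_top : a ≠ ⊤) (b : ℝ≥0∞) :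
    b⁻¹ = a * (a * b)⁻¹ := by
  rw [ENNReal.mul_inv (.inl ha_zero) (.inl ha_top), ← mul_assoc,
    ENNReal.mul_inv_cancel ha_zero ha_top, one_mul]

lemma measurePreserving_withDensity_of_map_eq_smul {α : Type*} [MeasurableSpace α]
    {μ : Measure α} {g : α → α} {w : α → ℝ≥0∞} {c : ℝ≥0∞} (hg : Measurable g) (hw : Measurable w)
    (hc_zero : c ≠ 0) (hc_top : c ≠ ⊤) (h_map : μ.map g = c⁻¹ • μ)
    (h_weight : ∀ x, w x = c * w (g x)) :
    MeasurePreserving g (μ.withDensity w) (μ.withDensity w) := by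
  refine ⟨hg, Measure.ext_of_lintegral _ fun f hf => ?_⟩
  calc ∫⁻ x, f x ∂(μ.withDensity w).map g = ∫⁻ x, c * (w * f) (g x) ∂μ := by
        rw [lintegral_map hf hg]
        refine (lintegral_withDensity_eq_lintegral_mul _ hw (hf.comp hg)).trans ?_
        refine lintegral_congr fun x => ?_
        rw [Pi.mul_apply, Pi.mul_apply, h_weight x, mul_assoc, Function.comp_apply]
    _ = c * ∫⁻ x, (w * f) x ∂μ.map g := by
        rw [lintegral_const_mul _ (by fun_prop), lintegral_map (hw.mul hf) hg]
    _ = ∫⁻ x, f x ∂μ.withDensity w := by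
        rw [h_map, lintegral_smul_measure, smul_eq_mul, ← mul_assoc,
          ENNReal.mul_inv_cancel hc_zero hc_top, one_mul,
          lintegral_withDensity_eq_lintegral_mul _ hw hf]

variable {n : Type*} [Fintype n] [DecidableEq n]

/-- A Haar measure of the general linear group, regarded as a measure on the space of all
matrices. -/
def generalLinearHaar (n : Type*) [Fintype n] [DecidableEq n] : Measure (Matrix n n ℂ) :=
  (matrixLebesgue n n).withDensity fun T => (‖T.det‖ₑ ^ (2 * Fintype.card n))⁻¹

instance : SFinite (generalLinearHaar n) := by
  unfold generalLinearHaar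
  infer_instance

lemma ae_isUnit_generalLinearHaar : ∀ᵐ T ∂generalLinearHaar n, IsUnit T :=
  (withDensity_absolutelyContinuous _ _).ae_le ae_isUnit_matrixLebesgue

lemma measurePreserving_mul_left_generalLinearHaar {Q : Matrix n n ℂ} (hQ : IsUnit Q) :
    MeasurePreserving (fun T => Q * T) (generalLinearHaar n) (generalLinearHaar n) := by
  refine measurePreserving_withDensity_of_map_eq_smul (by fun_prop) (by fun_prop)
    (pow_ne_zero _ (enorm_det_ne_zero hQ)) (by finiteness) (map_mul_left_matrixLebesgue hQ)
    fun T => ?_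
  rw [det_mul, enorm_mul, mul_pow]
  exact inv_eq_mul_inv_mul (pow_ne_zero _ (enorm_det_ne_zero hQ)) (by finiteness) _

/-- A measure on the cone of positive definite matrices that is invariant under the congruences
`H ↦ Tᴴ * H * T` by invertible matrices `T`. -/
structure IsCongrInvariant (μ : Measure (Matrix n n ℂ)) : Prop where
  ae_posDef : ∀ᵐ H ∂μ, H.PosDef
  measurePreserving {T : Matrix n n ℂ} (hT : IsUnit T) :
    MeasurePreserving (fun H => Tᴴ * H * T) μ μ

theorem IsCongrInvariant.lintegral_mul_lintegral {μ : Measure (Matrix n n ℂ)} [SFinite μ]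
    (hμ : IsCongrInvariant μ) {φ f : Matrix n n ℂ → ℝ≥0∞} (hφ : Measurable φ)
    (hf : Measurable f) :
    (∫⁻ T, φ (Tᴴ * T) ∂generalLinearHaar n) * ∫⁻ H, f H ∂μ =
      (∫⁻ H, φ H⁻¹ ∂μ) * ∫⁻ T, f (Tᴴ * T) ∂generalLinearHaar n := by
  calc (∫⁻ T, φ (Tᴴ * T) ∂generalLinearHaar n) * ∫⁻ H, f H ∂μ
      = ∫⁻ T, ∫⁻ H, φ (Tᴴ * T) * f (Tᴴ * H * T) ∂μ ∂generalLinearHaar n := by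
        rw [← lintegral_mul_const _ (by fun_prop)]
        refine lintegral_congr_ae ?_
        filter_upwards [ae_isUnit_generalLinearHaar] with T hT
        rw [lintegral_const_mul _ (by fun_prop), (hμ.measurePreserving hT).lintegral_comp hf]
    _ = ∫⁻ H, ∫⁻ T, φ (Tᴴ * T) * f (Tᴴ * H * T) ∂generalLinearHaar n ∂μ :=
        lintegral_lintegral_swap (by fun_prop)
    _ = ∫⁻ H, ∫⁻ T, φ (Tᴴ * H⁻¹ * T) * f (Tᴴ * T) ∂generalLinearHaar n ∂μ := by
        refine lintegral_congr_ae ?_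
        filter_upwards [hμ.ae_posDef] with H hH
        rw [← (measurePreserving_mul_left_generalLinearHaar (isUnit_invSqrt hH)).lintegral_comp
          (by fun_prop)]
        refine lintegral_congr fun T => ?_
        have h_inv : (invSqrt H * T)ᴴ * (invSqrt H * T) = Tᴴ * H⁻¹ * T := by
          rw [conjTranspose_mul, conjTranspose_invSqrt, ← invSqrt_mul_invSqrt hH]
          simp only [Matrix.mul_assoc]
        have h_one : (invSqrt H * T)ᴴ * H * (invSqrt H * T) = Tᴴ * T := by
          calc (invSqrt H * T)ᴴ * H * (invSqrt H * T)
              = Tᴴ * (invSqrt H * H * invSqrt H) * T := by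
                rw [conjTranspose_mul, conjTranspose_invSqrt]
                simp only [Matrix.mul_assoc]
            _ = Tᴴ * T := by rw [invSqrt_mul_mul_invSqrt hH, Matrix.mul_one]
        rw [h_inv, h_one]
    _ = ∫⁻ T, (∫⁻ H, φ (Tᴴ * H⁻¹ * T) ∂μ) * f (Tᴴ * T) ∂generalLinearHaar n := by
        rw [lintegral_lintegral_swap (by fun_prop)]
        exact lintegral_congr fun T => lintegral_mul_const _ (by fun_prop)
    _ = (∫⁻ H, φ H⁻¹ ∂μ) * ∫⁻ T, f (Tᴴ * T) ∂generalLinearHaar n := by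
        rw [← lintegral_const_mul _ (by fun_prop)]
        refine lintegral_congr_ae ?_
        filter_upwards [ae_isUnit_generalLinearHaar] with T hT
        have h_det : IsUnit T.det := (isUnit_iff_isUnit_det T).1 hT
        have h_det' : IsUnit Tᴴ.det := (isUnit_iff_isUnit_det Tᴴ).1 hT.star
        have h_congr (H : Matrix n n ℂ) : Tᴴ * (T * H * Tᴴ)⁻¹ * T = H⁻¹ := by
          rw [Matrix.mul_inv_rev, Matrix.mul_inv_rev, mul_nonsing_inv_cancel_left _ _ h_det',
            nonsing_inv_mul_cancel_right _ _ h_det]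
        rw [← (hμ.measurePreserving hT.star).lintegral_comp (by fun_prop)]
        simp only [star_eq_conjTranspose, conjTranspose_conjTranspose, h_congr]

end CongruenceInvariance

section CongruenceUniqueness

variable {k n : Type*} [Fintype k] [Fintype n] [DecidableEq n]

open scoped Matrix.Norms.L2Operator in
lemma exists_measurable_lintegral_gram_matrixLebesgue (k n : Type*) [Fintype k] [Fintype n] :
    ∃ κ : Matrix n n ℂ → ℝ≥0∞, Measurable κ ∧
      ∫⁻ G, κ (Gᴴ * G) ∂matrixLebesgue k n ≠ 0 ∧ ∫⁻ G, κ (Gᴴ * G) ∂matrixLebesgue k n ≠ ⊤ := by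
  classical
  have h_closed : MeasurableSet {H : Matrix n n ℂ | ‖H‖ ≤ 1} :=
    (isClosed_le continuous_norm continuous_const).measurableSet
  have h_gram (G : Matrix k n ℂ) : ‖Gᴴ * G‖ ≤ 1 ↔ ‖G‖ ≤ 1 := by
    rw [l2_opNorm_conjTranspose_mul_self, ← sq, sq_le_one_iff₀ (norm_nonneg G)]
  have h_preimage : (fun G : Matrix k n ℂ => Gᴴ * G) ⁻¹' {H | ‖H‖ ≤ 1} =
      Metric.closedBall 0 1 :=
    Set.ext fun G => (h_gram G).trans mem_closedBall_zero_iff.symm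
  have h_ball : ∫⁻ G, {H : Matrix n n ℂ | ‖H‖ ≤ 1}.indicator 1 (Gᴴ * G) ∂matrixLebesgue k n =
      matrixLebesgue k n (Metric.closedBall 0 1) := by
    rw [← h_preimage, ← Measure.map_apply (by fun_prop) h_closed,
      ← lintegral_indicator_one h_closed,
      lintegral_map (measurable_one.indicator h_closed) (by fun_prop)]
  refine ⟨_, measurable_one.indicator h_closed, ?_, ?_⟩
  · rw [h_ball]
    exact (Metric.measure_closedBall_pos _ _ one_pos).ne'
  · rw [h_ball]
    exact measure_closedBall_lt_top.ne

lemma exists_measurable_lintegral_gram_generalLinearHaar :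
    ∃ φ : Matrix n n ℂ → ℝ≥0∞, Measurable φ ∧
      ∫⁻ T, φ (Tᴴ * T) ∂generalLinearHaar n ≠ 0 ∧ ∫⁻ T, φ (Tᴴ * T) ∂generalLinearHaar n ≠ ⊤ := by
  obtain ⟨κ, hκ, h_zero, h_top⟩ := exists_measurable_lintegral_gram_matrixLebesgue n n
  suffices h_eq : ∫⁻ T, ‖(Tᴴ * T).det‖ₑ ^ Fintype.card n * κ (Tᴴ * T) ∂generalLinearHaar n =
      ∫⁻ T, κ (Tᴴ * T) ∂matrixLebesgue n n from
    ⟨fun H => ‖H.det‖ₑ ^ Fintype.card n * κ H, by fun_prop, h_eq ▸ h_zero, h_eq ▸ h_top⟩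
  rw [generalLinearHaar, lintegral_withDensity_eq_lintegral_mul _ (by fun_prop) (by fun_prop)]
  refine lintegral_congr_ae ?_
  filter_upwards [ae_isUnit_matrixLebesgue] with T hT
  have h_det : ‖(Tᴴ * T).det‖ₑ ^ Fintype.card n = ‖T.det‖ₑ ^ (2 * Fintype.card n) := by
    rw [det_mul, enorm_mul, enorm_det_conjTranspose, ← sq, ← pow_mul]
  rw [Pi.mul_apply, h_det, ← mul_assoc,
    ENNReal.inv_mul_cancel (pow_ne_zero _ (enorm_det_ne_zero hT)) (by finiteness), one_mul]

theorem IsCongrInvariant.exists_eq_smul {μ ν : Measure (Matrix n n ℂ)} [SFinite μ]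
    [SigmaFinite ν] (hμ : IsCongrInvariant μ) (hν : IsCongrInvariant ν) (hν_zero : ν ≠ 0) :
    ∃ K : ℝ≥0∞, μ = K • ν := by
  obtain ⟨φ, hφ, ha_zero, ha_top⟩ :=
    exists_measurable_lintegral_gram_generalLinearHaar (n := n)
  set a := ∫⁻ T, φ (Tᴴ * T) ∂generalLinearHaar n
  obtain ⟨s, hs, -, hνs_pos, hνs_top⟩ := Measure.exists_subset_measure_lt_top MeasurableSet.univ
    (Measure.measure_univ_pos.2 hν_zero)
  have h_formula {ρ : Measure (Matrix n n ℂ)} [SFinite ρ] (hρ : IsCongrInvariant ρ)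
      {t : Set (Matrix n n ℂ)} (ht : MeasurableSet t) :
      a * ρ t = (∫⁻ H, φ H⁻¹ ∂ρ) *
        ∫⁻ T, t.indicator 1 (Tᴴ * T) ∂generalLinearHaar n := by
    rw [← lintegral_indicator_one ht]
    exact hρ.lintegral_mul_lintegral hφ (measurable_one.indicator ht)
  have h_prod_zero : a * ν s ≠ 0 := mul_ne_zero ha_zero hνs_pos.ne'
  have h_prod_top : a * ν s ≠ ⊤ := ENNReal.mul_ne_top ha_top hνs_top.ne
  rw [h_formula hν hs] at h_prod_zero h_prod_top
  have hκ_zero : ∫⁻ H, φ H⁻¹ ∂ν ≠ 0 := left_ne_zero_of_mul h_prod_zero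
  have hκ_top : ∫⁻ H, φ H⁻¹ ∂ν ≠ ⊤ := fun h =>
    h_prod_top (h ▸ ENNReal.top_mul (right_ne_zero_of_mul h_prod_zero))
  refine ⟨(∫⁻ H, φ H⁻¹ ∂μ) * (∫⁻ H, φ H⁻¹ ∂ν)⁻¹, Measure.ext fun t ht => ?_⟩
  refine (ENNReal.mul_right_inj ha_zero ha_top).1 ?_
  calc a * μ t = (∫⁻ H, φ H⁻¹ ∂μ) * ∫⁻ T, t.indicator 1 (Tᴴ * T) ∂generalLinearHaar n :=
        h_formula hμ ht
    _ = (∫⁻ H, φ H⁻¹ ∂μ) * ((∫⁻ H, φ H⁻¹ ∂ν)⁻¹ * (a * ν t)) := by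
        rw [h_formula hν ht, ← mul_assoc _⁻¹, ENNReal.inv_mul_cancel hκ_zero hκ_top, one_mul]
    _ = a * (((∫⁻ H, φ H⁻¹ ∂μ) * (∫⁻ H, φ H⁻¹ ∂ν)⁻¹) • ν) t := by
        rw [Measure.smul_apply, smul_eq_mul]
        ring

/-- The congruence-invariant measure on the cone of positive definite matrices: a Haar measure of
the symmetric space `GL(n, ℂ) / U(n)`. -/
def posDefHaar (n : Type*) [Fintype n] [DecidableEq n] : Measure (Matrix n n ℂ) :=
  ((hermitianLebesgue n).withDensity fun H => (‖H.det‖ₑ ^ Fintype.card n)⁻¹).restrict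
    {H | H.PosDef}

instance : SigmaFinite (posDefHaar n) := by
  have h_sigma : SigmaFinite
      ((hermitianLebesgue n).withDensity fun H => (‖H.det‖ₑ ^ Fintype.card n)⁻¹) := by
    refine SigmaFinite.withDensity_of_ne_top ?_
    filter_upwards [ae_isUnit_hermitianLebesgue] with H hH
    exact ENNReal.inv_ne_top.2 (pow_ne_zero _ (enorm_det_ne_zero hH))
  unfold posDefHaar
  infer_instance

lemma posDefHaar_ne_zero : posDefHaar n ≠ 0 := by
  rw [posDefHaar, Ne, Measure.restrict_eq_zero]
  refine fun h_zero => hermitianLebesgue_setOf_posDef_ne_zero (n := n) ?_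
  refine withDensity_absolutelyContinuous' (by fun_prop) (ae_of_all _ fun H => ?_) h_zero
  exact ENNReal.inv_ne_zero.2 (by finiteness)

lemma isCongrInvariant_posDefHaar : IsCongrInvariant (posDefHaar n) where
  ae_posDef := ae_restrict_mem measurableSet_setOf_posDef
  measurePreserving {T} hT := by
    have h_preserving := measurePreserving_withDensity_of_map_eq_smul (by fun_prop)
      (w := fun H => (‖H.det‖ₑ ^ Fintype.card n)⁻¹) (by fun_prop)
      (pow_ne_zero _ (enorm_det_ne_zero hT)) (by finiteness)
      (map_congr_hermitianLebesgue hT) fun H => by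
        have h_det : ‖(Tᴴ * H * T).det‖ₑ ^ Fintype.card n =
            ‖T.det‖ₑ ^ (2 * Fintype.card n) * ‖H.det‖ₑ ^ Fintype.card n := by
          rw [det_mul, det_mul, enorm_mul, enorm_mul, enorm_det_conjTranspose]
          ring
        rw [h_det]
        exact inv_eq_mul_inv_mul (pow_ne_zero _ (enorm_det_ne_zero hT)) (by finiteness) _
    have h_preimage : (fun H => Tᴴ * H * T) ⁻¹' {H | H.PosDef} = {H | H.PosDef} :=
      Set.ext fun H => IsUnit.posDef_star_left_conjugate_iff hT
    have h_restrict := h_preserving.restrict_preimage (s := {H | H.PosDef})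
      measurableSet_setOf_posDef
    rwa [h_preimage] at h_restrict

/-- The law of `Gᴴ * G` when `G` follows the measure on `k × n` matrices that is invariant under
right multiplication by invertible matrices. -/
def gramHaar (k n : Type*) [Fintype k] [Fintype n] [DecidableEq n] : Measure (Matrix n n ℂ) :=
  ((matrixLebesgue k n).withDensity
    fun G => (‖(Gᴴ * G).det‖ₑ ^ Fintype.card k)⁻¹).map fun G => Gᴴ * G

instance : SFinite (gramHaar k n) := by
  unfold gramHaar
  infer_instance

lemma isCongrInvariant_gramHaar (h_card : Fintype.card n ≤ Fintype.card k) :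
    IsCongrInvariant (gramHaar k n) where
  ae_posDef := by
    rw [gramHaar, ae_map_iff (by fun_prop) measurableSet_setOf_posDef]
    exact (withDensity_absolutelyContinuous _ _).ae_le (ae_posDef_gram_matrixLebesgue h_card)
  measurePreserving {T} hT := by
    classical
    have h_right : MeasurePreserving (fun G : Matrix k n ℂ => G * T) _ _ :=
      measurePreserving_withDensity_of_map_eq_smul (by fun_prop)
        (w := fun G => (‖(Gᴴ * G).det‖ₑ ^ Fintype.card k)⁻¹) (by fun_prop)
        (pow_ne_zero _ (enorm_det_ne_zero hT)) (by finiteness)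
        (map_mul_right_matrixLebesgue hT) fun G => by
          have h_det : ‖((G * T)ᴴ * (G * T)).det‖ₑ ^ Fintype.card k =
              ‖T.det‖ₑ ^ (2 * Fintype.card k) * ‖(Gᴴ * G).det‖ₑ ^ Fintype.card k := by
            rw [conjTranspose_mul, ← Matrix.mul_assoc, Matrix.mul_assoc Tᴴ, det_mul, det_mul,
              enorm_mul, enorm_mul, enorm_det_conjTranspose]
            ring
          rw [h_det]
          exact inv_eq_mul_inv_mul (pow_ne_zero _ (enorm_det_ne_zero hT)) (by finiteness) _
    refine ⟨by fun_prop, ?_⟩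
    rw [gramHaar, Measure.map_map (by fun_prop) (by fun_prop)]
    nth_rw 2 [← h_right.map_eq]
    rw [Measure.map_map (by fun_prop) (by fun_prop)]
    congr 1
    funext G
    simp [Matrix.mul_assoc]

/-- The function `H ↦ det(H)^d` on positive semidefinite matrices, extended by zero. -/
def posSemidefDetPow (d : ℕ) : Matrix n n ℂ → ℝ≥0∞ :=
  {H | H.PosSemidef}.indicator fun H => ‖H.det‖ₑ ^ d

@[fun_prop]
lemma measurable_posSemidefDetPow {α : Type*} [MeasurableSpace α] {f : α → Matrix n n ℂ} (d : ℕ)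
    (hf : Measurable f) : Measurable fun a => posSemidefDetPow d (f a) :=
  (Measurable.indicator (by fun_prop) measurableSet_setOf_posSemidef).comp hf

lemma posSemidefDetPow_of_posSemidef {H : Matrix n n ℂ} (hH : H.PosSemidef) (d : ℕ) :
    posSemidefDetPow d H = ‖H.det‖ₑ ^ d :=
  Set.indicator_of_mem (s := {H : Matrix n n ℂ | H.PosSemidef}) hH _

lemma posSemidefDetPow_of_not_posSemidef {H : Matrix n n ℂ} (hH : ¬H.PosSemidef) (d : ℕ) :
    posSemidefDetPow d H = 0 :=
  Set.indicator_of_notMem (s := {H : Matrix n n ℂ | H.PosSemidef}) hH _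

lemma posSemidefDetPow_congr (d : ℕ) (H : Matrix n n ℂ) {T : Matrix n n ℂ} (hT : IsUnit T) :
    posSemidefDetPow d (Tᴴ * H * T) = ‖T.det‖ₑ ^ (2 * d) * posSemidefDetPow d H := by
  have h_iff : (Tᴴ * H * T).PosSemidef ↔ H.PosSemidef :=
    IsUnit.posSemidef_star_left_conjugate_iff hT
  by_cases hH : H.PosSemidef
  · rw [posSemidefDetPow_of_posSemidef hH, posSemidefDetPow_of_posSemidef (h_iff.2 hH), det_mul,
      det_mul, enorm_mul, enorm_mul, enorm_det_conjTranspose]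
    ring
  · rw [posSemidefDetPow_of_not_posSemidef hH, posSemidefDetPow_of_not_posSemidef (mt h_iff.1 hH),
      mul_zero]

lemma lintegral_det_pow_mul_posDefHaar (h_card : Fintype.card n ≤ Fintype.card k)
    {f : Matrix n n ℂ → ℝ≥0∞} (hf : Measurable f) :
    ∫⁻ H, ‖H.det‖ₑ ^ Fintype.card k * f H ∂posDefHaar n =
      ∫⁻ H, posSemidefDetPow (Fintype.card k - Fintype.card n) H * f H ∂hermitianLebesgue n := by
  rw [posDefHaar, setLIntegral_withDensity_eq_setLIntegral_mul _ (by fun_prop) (by fun_prop)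
    measurableSet_setOf_posDef, ← lintegral_indicator measurableSet_setOf_posDef]
  refine lintegral_congr_ae ?_
  filter_upwards [ae_isUnit_hermitianLebesgue] with H hH
  by_cases h_psd : H.PosSemidef
  · have h_pd : H ∈ {H : Matrix n n ℂ | H.PosDef} := h_psd.posDef_iff_isUnit.2 hH
    have h_pow : ‖H.det‖ₑ ^ Fintype.card k =
        ‖H.det‖ₑ ^ Fintype.card n * ‖H.det‖ₑ ^ (Fintype.card k - Fintype.card n) := by
      rw [← pow_add, Nat.add_sub_of_le h_card]
    rw [Set.indicator_of_mem h_pd, posSemidefDetPow_of_posSemidef h_psd, Pi.mul_apply, h_pow,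
      ← mul_assoc, ← mul_assoc, ENNReal.inv_mul_cancel (pow_ne_zero _ (enorm_det_ne_zero hH))
        (by finiteness), one_mul]
  · have h_not_pd : H ∉ {H : Matrix n n ℂ | H.PosDef} := fun h => h_psd (PosDef.posSemidef h)
    rw [Set.indicator_of_notMem h_not_pd, posSemidefDetPow_of_not_posSemidef h_psd, zero_mul]

theorem exists_map_gram_matrixLebesgue (h_card : Fintype.card n ≤ Fintype.card k) :
    ∃ K : ℝ≥0∞, (matrixLebesgue k n).map (fun G => Gᴴ * G) =
      K • (hermitianLebesgue n).withDensity
        (posSemidefDetPow (Fintype.card k - Fintype.card n)) := by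
  obtain ⟨K, hK⟩ := (isCongrInvariant_gramHaar h_card).exists_eq_smul
    isCongrInvariant_posDefHaar posDefHaar_ne_zero
  refine ⟨K, Measure.ext_of_lintegral _ fun f hf => ?_⟩
  calc ∫⁻ H, f H ∂(matrixLebesgue k n).map (fun G => Gᴴ * G)
      = ∫⁻ H, ‖H.det‖ₑ ^ Fintype.card k * f H ∂gramHaar k n := by
        rw [gramHaar, lintegral_map hf (by fun_prop), lintegral_map (by fun_prop) (by fun_prop),
          lintegral_withDensity_eq_lintegral_mul _ (by fun_prop) (by fun_prop)]
        refine lintegral_congr_ae ?_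
        filter_upwards [ae_posDef_gram_matrixLebesgue h_card] with G hG
        rw [Pi.mul_apply, ← mul_assoc, ENNReal.inv_mul_cancel
          (pow_ne_zero _ (enorm_det_ne_zero hG.isUnit)) (by finiteness), one_mul]
    _ = K * ∫⁻ H, ‖H.det‖ₑ ^ Fintype.card k * f H ∂posDefHaar n := by
        rw [hK, lintegral_smul_measure, smul_eq_mul]
    _ = K * ∫⁻ H, posSemidefDetPow (Fintype.card k - Fintype.card n) H * f H
          ∂hermitianLebesgue n := by
        rw [lintegral_det_pow_mul_posDefHaar h_card hf]
    _ = ∫⁻ H, f H ∂(K • (hermitianLebesgue n).withDensity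
          (posSemidefDetPow (Fintype.card k - Fintype.card n))) := by
        rw [lintegral_smul_measure, smul_eq_mul,
          lintegral_withDensity_eq_lintegral_mul _ (by fun_prop) hf]
        rfl

end CongruenceUniqueness

section GramOfRows

variable {k m n p : Type*} [Fintype k] [Fintype m] [Fintype p]

lemma gram_eq_add_gram_submatrix (σ : p ⊕ k ≃ m) (G : Matrix m n ℂ) :
    Gᴴ * G = (G.submatrix (σ ∘ Sum.inl) id)ᴴ * G.submatrix (σ ∘ Sum.inl) id +
      (G.submatrix (σ ∘ Sum.inr) id)ᴴ * G.submatrix (σ ∘ Sum.inr) id := by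
  ext i j
  simp [Matrix.mul_apply, ← σ.sum_comp]

variable [Fintype n]

lemma measurePreserving_submatrix_sum (σ : p ⊕ k ≃ m) :
    MeasurePreserving
      (fun G : Matrix m n ℂ => (G.submatrix (σ ∘ Sum.inl) id, G.submatrix (σ ∘ Sum.inr) id))
      (matrixLebesgue m n) ((matrixLebesgue p n).prod (matrixLebesgue k n)) :=
  (measurePreserving_sumPiEquivProdPi (X := fun _ : p ⊕ k => n → ℂ) fun _ => volume).comp
    (measurePreserving_piCongrLeft (α := fun _ : m => n → ℂ) (fun _ => volume) σ).symm

open scoped Matrix.Norms.L2Operator in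
lemma measurePreserving_add_left_hermitianLebesgue {A : Matrix n n ℂ} (hA : A.IsHermitian) :
    MeasurePreserving (fun H => A + H) (hermitianLebesgue n) (hermitianLebesgue n) := by
  classical
  let A' : selfAdjoint.submodule ℝ (Matrix n n ℂ) := ⟨A, hA⟩
  refine ⟨by fun_prop, ?_⟩
  rw [hermitianLebesgue, Measure.map_map (by fun_prop) measurable_subtype_coe]
  nth_rw 2 [← (measurePreserving_add_left Measure.addHaar A').map_eq]
  rw [Measure.map_map measurable_subtype_coe (by fun_prop)]
  rfl

variable [DecidableEq n]

theorem exists_map_submatrix_gram_matrixLebesgue (σ : p ⊕ k ≃ m)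
    (h_card : Fintype.card n ≤ Fintype.card k) :
    ∃ K : ℝ≥0∞, (matrixLebesgue m n).map (fun G => (G.submatrix (σ ∘ Sum.inl) id, Gᴴ * G)) =
      K • ((matrixLebesgue p n).prod (hermitianLebesgue n)).withDensity fun x =>
        posSemidefDetPow (Fintype.card k - Fintype.card n) (x.2 - x.1ᴴ * x.1) := by
  obtain ⟨K, hK⟩ := exists_map_gram_matrixLebesgue h_card
  refine ⟨K, Measure.ext_of_lintegral _ fun F hF => ?_⟩
  set d := Fintype.card k - Fintype.card n
  calc ∫⁻ x, F x ∂(matrixLebesgue m n).map (fun G => (G.submatrix (σ ∘ Sum.inl) id, Gᴴ * G))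
      = ∫⁻ A, ∫⁻ B, F (A, Aᴴ * A + Bᴴ * B) ∂matrixLebesgue k n ∂matrixLebesgue p n := by
        rw [lintegral_map hF (by fun_prop), ← lintegral_prod (fun x : Matrix p n ℂ × Matrix k n ℂ =>
            F (x.1, x.1ᴴ * x.1 + x.2ᴴ * x.2)) (by fun_prop),
          ← (measurePreserving_submatrix_sum σ).lintegral_comp (by fun_prop)]
        simp only [← gram_eq_add_gram_submatrix]
    _ = ∫⁻ A, K * ∫⁻ H, posSemidefDetPow d H * F (A, Aᴴ * A + H)
          ∂hermitianLebesgue n ∂matrixLebesgue p n := by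
        refine lintegral_congr fun A => ?_
        rw [← lintegral_map (f := fun H => F (A, Aᴴ * A + H)) (by fun_prop) (by fun_prop), hK,
          lintegral_smul_measure, smul_eq_mul,
          lintegral_withDensity_eq_lintegral_mul _ (by fun_prop) (by fun_prop)]
        rfl
    _ = ∫⁻ A, K * ∫⁻ S, posSemidefDetPow d (S - Aᴴ * A) * F (A, S)
          ∂hermitianLebesgue n ∂matrixLebesgue p n := by
        refine lintegral_congr fun A => ?_
        have h_shift := (measurePreserving_add_left_hermitianLebesgue
          (isHermitian_conjTranspose_mul_self A)).lintegral_comp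
          (f := fun S => posSemidefDetPow d (S - Aᴴ * A) * F (A, S)) (by fun_prop)
        simp only [add_sub_cancel_left] at h_shift
        rw [h_shift]
    _ = ∫⁻ x, F x ∂(K • ((matrixLebesgue p n).prod (hermitianLebesgue n)).withDensity fun x =>
          posSemidefDetPow d (x.2 - x.1ᴴ * x.1)) := by
        rw [lintegral_const_mul _ (by fun_prop), lintegral_smul_measure, smul_eq_mul,
          lintegral_withDensity_eq_lintegral_mul _ (by fun_prop) hF,
          lintegral_prod _ (by fun_prop)]
        rfl

end GramOfRows

section CornerOfPolarFrame

variable {k m n p : Type*} [Fintype k] [Fintype m] [Fintype n] [Fintype p] [DecidableEq n]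

/-- The isometry `G (GᴴG)^(-1/2)` in the polar decomposition of a matrix `G` with positive definite
Gram matrix. -/
def polarFrame (G : Matrix m n ℂ) : Matrix m n ℂ :=
  G * invSqrt (Gᴴ * G)

@[fun_prop]
lemma measurable_polarFrame {α : Type*} [MeasurableSpace α] {f : α → Matrix m n ℂ}
    (hf : Measurable f) : Measurable fun a => polarFrame (f a) := by
  unfold polarFrame
  fun_prop

lemma gram_polarFrame {G : Matrix m n ℂ} (hG : (Gᴴ * G).PosDef) :
    (polarFrame G)ᴴ * polarFrame G = 1 := by
  rw [← invSqrt_mul_mul_invSqrt hG, polarFrame, conjTranspose_mul, conjTranspose_invSqrt]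
  simp only [Matrix.mul_assoc]

lemma posSemidefDetPow_sub_gram {S : Matrix n n ℂ} (hS : S.PosDef) (d : ℕ) (A : Matrix p n ℂ) :
    posSemidefDetPow d (S - Aᴴ * A) =
      ‖S.det‖ₑ ^ d * posSemidefDetPow d (1 - (A * invSqrt S)ᴴ * (A * invSqrt S)) := by
  have h_congr : 1 - (A * invSqrt S)ᴴ * (A * invSqrt S) =
      (invSqrt S)ᴴ * (S - Aᴴ * A) * invSqrt S := by
    rw [conjTranspose_mul, conjTranspose_invSqrt, Matrix.mul_sub, Matrix.sub_mul,
      invSqrt_mul_mul_invSqrt hS]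
    simp only [Matrix.mul_assoc]
  rw [h_congr, posSemidefDetPow_congr d _ (isUnit_invSqrt hS), pow_mul, enorm_det_invSqrt_sq hS,
    ← mul_assoc, ← mul_pow, ENNReal.mul_inv_cancel (enorm_det_ne_zero hS.isUnit) (by finiteness),
    one_pow, one_mul]

lemma lintegral_posSemidefDetPow_sub_gram {S : Matrix n n ℂ} (hS : IsUnit S) (d : ℕ)
    {f : Matrix p n ℂ → ℝ≥0∞} (hf : Measurable f) :
    ∫⁻ A, posSemidefDetPow d (S - Aᴴ * A) * f (A * invSqrt S) ∂matrixLebesgue p n =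
      posSemidefDetPow (d + Fintype.card p) S *
        ∫⁻ A, posSemidefDetPow d (1 - Aᴴ * A) * f A ∂matrixLebesgue p n := by
  classical
  by_cases h_psd : S.PosSemidef
  · have h_pd : S.PosDef := h_psd.posDef_iff_isUnit.2 hS
    simp only [posSemidefDetPow_sub_gram h_pd, mul_assoc]
    rw [lintegral_const_mul _ (by fun_prop), ← lintegral_map
      (f := fun A => posSemidefDetPow d (1 - Aᴴ * A) * f A) (by fun_prop) (by fun_prop),
      map_mul_right_matrixLebesgue (isUnit_invSqrt h_pd), lintegral_smul_measure, smul_eq_mul,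
      pow_mul, enorm_det_invSqrt_sq h_pd, ← ENNReal.inv_pow, inv_inv,
      posSemidefDetPow_of_posSemidef h_psd, pow_add, mul_assoc]
  · have h_not_psd (A : Matrix p n ℂ) : ¬(S - Aᴴ * A).PosSemidef := fun h =>
      h_psd (sub_add_cancel S (Aᴴ * A) ▸ h.add (posSemidef_conjTranspose_mul_self A))
    simp only [posSemidefDetPow_of_not_posSemidef h_psd,
      posSemidefDetPow_of_not_posSemidef (h_not_psd _), zero_mul, lintegral_zero]

theorem exists_map_submatrix_polarFrame (σ : p ⊕ k ≃ m) (h_card : Fintype.card n ≤ Fintype.card k)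
    {κ : Matrix n n ℂ → ℝ≥0∞} (hκ : Measurable κ) :
    ∃ K : ℝ≥0∞, ((matrixLebesgue m n).withDensity fun G => κ (Gᴴ * G)).map
        (fun G => (polarFrame G).submatrix (σ ∘ Sum.inl) id) =
      K • (matrixLebesgue p n).withDensity fun A =>
        posSemidefDetPow (Fintype.card k - Fintype.card n) (1 - Aᴴ * A) := by
  obtain ⟨K, hK⟩ := exists_map_submatrix_gram_matrixLebesgue (n := n) σ h_card
  set d := Fintype.card k - Fintype.card n
  refine ⟨K * ∫⁻ S, κ S * posSemidefDetPow (d + Fintype.card p) S ∂hermitianLebesgue n,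
    Measure.ext_of_lintegral _ fun f hf => ?_⟩
  have h_rows (G : Matrix m n ℂ) : (polarFrame G).submatrix (σ ∘ Sum.inl) id =
      G.submatrix (σ ∘ Sum.inl) id * invSqrt (Gᴴ * G) := rfl
  calc ∫⁻ A, f A ∂((matrixLebesgue m n).withDensity fun G => κ (Gᴴ * G)).map
        (fun G => (polarFrame G).submatrix (σ ∘ Sum.inl) id)
      = ∫⁻ x, κ x.2 * f (x.1 * invSqrt x.2) ∂(matrixLebesgue m n).map
          fun G => (G.submatrix (σ ∘ Sum.inl) id, Gᴴ * G) := by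
        rw [lintegral_map hf (by fun_prop), lintegral_map (by fun_prop) (by fun_prop),
          lintegral_withDensity_eq_lintegral_mul _ (by fun_prop) (by fun_prop)]
        simp only [h_rows, Pi.mul_apply]
    _ = K * ∫⁻ S, ∫⁻ A, posSemidefDetPow d (S - Aᴴ * A) * (κ S * f (A * invSqrt S))
          ∂matrixLebesgue p n ∂hermitianLebesgue n := by
        rw [hK, lintegral_smul_measure, smul_eq_mul,
          lintegral_withDensity_eq_lintegral_mul _ (by fun_prop) (by fun_prop),
          lintegral_prod_symm _ (by fun_prop)]
        rfl
    _ = K * ∫⁻ S, κ S * posSemidefDetPow (d + Fintype.card p) S *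
          ∫⁻ A, posSemidefDetPow d (1 - Aᴴ * A) * f A ∂matrixLebesgue p n
          ∂hermitianLebesgue n := by
        congr 1
        refine lintegral_congr_ae ?_
        filter_upwards [ae_isUnit_hermitianLebesgue] with S hS
        simp only [mul_left_comm _ (κ S)]
        rw [lintegral_const_mul _ (by fun_prop), lintegral_posSemidefDetPow_sub_gram hS d hf,
          mul_assoc]
    _ = _ := by
        rw [lintegral_mul_const _ (by fun_prop), lintegral_smul_measure, smul_eq_mul,
          lintegral_withDensity_eq_lintegral_mul _ (by fun_prop) hf, mul_assoc]
        rfl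

end CornerOfPolarFrame

section HaarProbability

variable {G : Type*} [Group G] [MeasurableSpace G] [MeasurableMul₂ G] [MeasurableInv G]
  (ℙ : Measure G) [IsProbabilityMeasure ℙ] [ℙ.IsMulLeftInvariant]

lemma inv_eq_self_of_isProbabilityMeasure : ℙ.inv = ℙ := by
  refine Measure.ext_of_lintegral _ fun f hf => ?_
  calc ∫⁻ U, f U ∂ℙ.inv = ∫⁻ _, ∫⁻ U, f U⁻¹ ∂ℙ ∂ℙ := by
        rw [Measure.inv_def, lintegral_map hf measurable_inv, lintegral_const, measure_univ,
          mul_one]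
    _ = ∫⁻ V, ∫⁻ U, f (U⁻¹ * V) ∂ℙ ∂ℙ := by
        refine lintegral_congr fun V => ?_
        rw [← lintegral_mul_left_eq_self (fun U => f U⁻¹) V⁻¹]
        simp only [_root_.mul_inv_rev, inv_inv]
    _ = ∫⁻ U, ∫⁻ V, f (U⁻¹ * V) ∂ℙ ∂ℙ := lintegral_lintegral_swap (by fun_prop)
    _ = ∫⁻ U, f U ∂ℙ := by
        simp only [lintegral_mul_left_eq_self f, lintegral_const, measure_univ, mul_one]

lemma isMulRightInvariant_of_isProbabilityMeasure : ℙ.IsMulRightInvariant :=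
  inv_eq_self_of_isProbabilityMeasure ℙ ▸ inferInstanceAs ℙ.inv.IsMulRightInvariant

end HaarProbability

section UnitaryInvariance

variable {m n : Type*} [Fintype m] [DecidableEq m]

lemma gram_unitaryGroup_mul (U : unitaryGroup m ℂ) (G : Matrix m n ℂ) :
    (U.val * G)ᴴ * (U.val * G) = Gᴴ * G := by
  have hU : U.valᴴ * U.val = 1 := mem_unitaryGroup_iff'.1 U.2
  rw [conjTranspose_mul, Matrix.mul_assoc, ← Matrix.mul_assoc _ U.val, hU, Matrix.one_mul]

lemma enorm_det_unitaryGroup (U : unitaryGroup m ℂ) : ‖U.val.det‖ₑ = 1 := by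
  rw [← ofReal_norm, CStarRing.norm_of_mem_unitary (det_of_mem_unitary U.2), ENNReal.ofReal_one]

lemma measurePreserving_unitaryGroup_mul_withDensity_gram [Fintype n]
    (U : unitaryGroup m ℂ) {κ : Matrix n n ℂ → ℝ≥0∞} (hκ : Measurable κ) :
    MeasurePreserving (fun G => U.val * G)
      ((matrixLebesgue m n).withDensity fun G => κ (Gᴴ * G))
      ((matrixLebesgue m n).withDensity fun G => κ (Gᴴ * G)) := by
  refine measurePreserving_withDensity_of_map_eq_smul (by fun_prop) (by fun_prop) one_ne_zero
    ENNReal.one_ne_top ?_ fun G => ?_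
  · have hU : IsUnit U.val := (Unitary.toUnits U).isUnit
    rw [map_mul_left_matrixLebesgue hU, enorm_det_unitaryGroup, one_pow]
  · rw [gram_unitaryGroup_mul, one_mul]

lemma exists_unitaryGroup_submatrix_eq [DecidableEq n] (c : n ↪ m) {X : Matrix m n ℂ}
    (hX : Xᴴ * X = 1) : ∃ V : unitaryGroup m ℂ, V.val.submatrix id c = X := by
  let v : m → EuclideanSpace ℂ m :=
    Function.extend c (fun j => WithLp.toLp 2 fun i => X i j) 0
  have hv (j : n) : v (c j) = WithLp.toLp 2 fun i => X i j := c.injective.extend_apply _ _ j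
  have h_orthonormal : Orthonormal ℂ ((Set.range c).domRestrict v) := by
    rw [orthonormal_iff_ite]
    rintro ⟨_, i, rfl⟩ ⟨_, j, rfl⟩
    have h_entry := congrFun (congrFun hX i) j
    simp only [Matrix.mul_apply, Matrix.one_apply, conjTranspose_apply] at h_entry
    simp [Set.domRestrict_apply, hv, PiLp.inner_apply, Subtype.ext_iff, ← h_entry, mul_comm]
  obtain ⟨b, hb⟩ := h_orthonormal.exists_orthonormalBasis_extension_of_card_eq (by simp)
  refine ⟨⟨of fun i j => b j i, mem_unitaryGroup_iff'.2 ?_⟩, ?_⟩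
  · ext i j
    rw [Matrix.one_apply, ← orthonormal_iff_ite.1 b.orthonormal i j]
    simp [Matrix.mul_apply, PiLp.inner_apply, mul_comm]
  · ext i j
    simp [hb (c j) ⟨j, rfl⟩, hv]

variable [Fintype n] [DecidableEq n]

lemma polarFrame_unitaryGroup_mul (U : unitaryGroup m ℂ) (G : Matrix m n ℂ) :
    polarFrame (U.val * G) = U.val * polarFrame G := by
  rw [polarFrame, gram_unitaryGroup_mul, Matrix.mul_assoc, polarFrame]

theorem map_polarFrame_eq_smul_map_submatrix (ℙ : Measure (unitaryGroup m ℂ))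
    [IsProbabilityMeasure ℙ] [ℙ.IsMulLeftInvariant] (c : n ↪ m) {γ : Measure (Matrix m n ℂ)}
    [SFinite γ] (h_unitary : ∀ U : unitaryGroup m ℂ, MeasurePreserving (fun G => U.val * G) γ γ)
    (h_posDef : ∀ᵐ G ∂γ, (Gᴴ * G).PosDef) :
    γ.map polarFrame = γ Set.univ • ℙ.map fun U => U.val.submatrix id c := by
  have h_right := isMulRightInvariant_of_isProbabilityMeasure ℙ
  refine Measure.ext_of_lintegral _ fun f hf => ?_
  calc ∫⁻ X, f X ∂γ.map polarFrame
      = ∫⁻ _, ∫⁻ G, f (polarFrame G) ∂γ ∂ℙ := by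
        rw [lintegral_map hf (by fun_prop), lintegral_const, measure_univ, mul_one]
    _ = ∫⁻ U, ∫⁻ G, f (U.val * polarFrame G) ∂γ ∂ℙ := by
        refine lintegral_congr fun U => ?_
        rw [← (h_unitary U).lintegral_comp (by fun_prop)]
        simp only [polarFrame_unitaryGroup_mul]
    _ = ∫⁻ G, ∫⁻ U, f (U.val * polarFrame G) ∂ℙ ∂γ := lintegral_lintegral_swap (by fun_prop)
    _ = ∫⁻ _, ∫⁻ U, f (U.val.submatrix id c) ∂ℙ ∂γ := by
        refine lintegral_congr_ae ?_
        filter_upwards [h_posDef] with G hG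
        obtain ⟨V, hV⟩ := exists_unitaryGroup_submatrix_eq c (gram_polarFrame hG)
        rw [← lintegral_mul_right_eq_self (fun U => f (U.val.submatrix id c)) V, ← hV]
        rfl
    _ = ∫⁻ X, f X ∂(γ Set.univ • ℙ.map fun U => U.val.submatrix id c) := by
        rw [lintegral_const, lintegral_smul_measure, lintegral_map hf (by fun_prop), smul_eq_mul,
          mul_comm]

lemma smul_map_submatrix_eq_map_submatrix_polarFrame {p : Type*} [Finite p]
    (ℙ : Measure (unitaryGroup m ℂ)) [IsProbabilityMeasure ℙ] [ℙ.IsMulLeftInvariant]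
    (r : p → m) (c : n ↪ m) {γ : Measure (Matrix m n ℂ)} [SFinite γ]
    (h_unitary : ∀ U : unitaryGroup m ℂ, MeasurePreserving (fun G => U.val * G) γ γ)
    (h_posDef : ∀ᵐ G ∂γ, (Gᴴ * G).PosDef) :
    γ Set.univ • ℙ.map (fun U => U.val.submatrix r c) =
      γ.map fun G => (polarFrame G).submatrix r id := by
  calc γ Set.univ • ℙ.map (fun U => U.val.submatrix r c)
      = (γ Set.univ • ℙ.map fun U => U.val.submatrix id c).map fun X => X.submatrix r id := by
        rw [Measure.map_smul, Measure.map_map (by fun_prop) (by fun_prop)]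
        rfl
    _ = γ.map fun G => (polarFrame G).submatrix r id := by
        rw [← map_polarFrame_eq_smul_map_submatrix ℙ c h_unitary h_posDef,
          Measure.map_map (by fun_prop) (by fun_prop)]
        rfl

end UnitaryInvariance

section CornerDensity

lemma exists_eq_ofReal_smul_of_isProbabilityMeasure {α : Type*} [MeasurableSpace α]
    {μ ν : Measure α} [IsProbabilityMeasure μ] {a b : ℝ≥0∞} (ha_zero : a ≠ 0) (ha_top : a ≠ ⊤)
    (h_eq : a • μ = b • ν) : ∃ C : ℝ, 0 < C ∧ μ = ENNReal.ofReal C • ν := by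
  have h_mass : a = b * ν Set.univ := by
    simpa using congrArg (fun ρ : Measure α => ρ Set.univ) h_eq
  have hν_zero : ν Set.univ ≠ 0 := right_ne_zero_of_mul (h_mass ▸ ha_zero)
  have hb_zero : b ≠ 0 := left_ne_zero_of_mul (h_mass ▸ ha_zero)
  have hb_top : b ≠ ⊤ := fun h => ha_top (by rw [h_mass, h, ENNReal.top_mul hν_zero])
  have h_ratio_top : a⁻¹ * b ≠ ⊤ := ENNReal.mul_ne_top (ENNReal.inv_ne_top.2 ha_zero) hb_top
  refine ⟨(a⁻¹ * b).toReal,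
    ENNReal.toReal_pos (mul_ne_zero (ENNReal.inv_ne_zero.2 ha_top) hb_zero) h_ratio_top, ?_⟩
  rw [ENNReal.ofReal_toReal h_ratio_top, mul_smul, ← h_eq, ← mul_smul,
    ENNReal.inv_mul_cancel ha_zero ha_top, one_smul]

lemma exists_sum_equiv_comp_inl_eq {m p : Type*} (r : p ↪ m) :
    ∃ σ : p ⊕ ↑(Set.range r)ᶜ ≃ m, σ ∘ Sum.inl = r := by
  classical
  exact ⟨((Equiv.ofInjective r r.injective).sumCongr (Equiv.refl _)).trans
    (Equiv.Set.sumCompl (Set.range r)), rfl⟩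

variable {m n p : Type*} [Fintype m] [Fintype n] [Fintype p] [DecidableEq n]

lemma ofReal_mul_posSemidefDetPow {C : ℝ} (hC : 0 ≤ C) (d : ℕ) (H : Matrix n n ℂ) :
    ENNReal.ofReal C * posSemidefDetPow d H =
      {H : Matrix n n ℂ | H.PosSemidef}.indicator
        (fun H => ENNReal.ofReal (C * H.det.re ^ d)) H := by
  by_cases hH : H.PosSemidef
  · have h_det : H.det.re = ‖H.det‖ :=
      congrArg Complex.re (RCLike.norm_of_nonneg' hH.det_nonneg).symm
    rw [posSemidefDetPow_of_posSemidef hH,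
      Set.indicator_of_mem (s := {H : Matrix n n ℂ | H.PosSemidef}) hH, h_det,
      ENNReal.ofReal_mul hC, ENNReal.ofReal_pow (norm_nonneg _), ofReal_norm]
  · rw [posSemidefDetPow_of_not_posSemidef hH,
      Set.indicator_of_notMem (s := {H : Matrix n n ℂ | H.PosSemidef}) hH, mul_zero]

theorem corner_of_haar_unitary_density_general [DecidableEq m] (ℙ : Measure (unitaryGroup m ℂ))
    [IsProbabilityMeasure ℙ] [ℙ.IsMulLeftInvariant] (r : p ↪ m) (c : n ↪ m)
    (h_card : Fintype.card p + Fintype.card n ≤ Fintype.card m) :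
    ∃ C : ℝ, 0 < C ∧ ℙ.map (fun U => U.val.submatrix r c) =
      (matrixLebesgue p n).withDensity ({A | (1 - Aᴴ * A).PosSemidef}.indicator fun A =>
        ENNReal.ofReal
          (C * (1 - Aᴴ * A).det.re ^ (Fintype.card m - Fintype.card p - Fintype.card n))) := by
  classical
  obtain ⟨σ, hσ⟩ := exists_sum_equiv_comp_inl_eq r
  have h_compl : Fintype.card ↑(Set.range r)ᶜ = Fintype.card m - Fintype.card p := by
    rw [← Fintype.card_congr σ, Fintype.card_sum, Nat.add_sub_cancel_left]
  obtain ⟨κ, hκ, h_zero, h_top⟩ := exists_measurable_lintegral_gram_matrixLebesgue m n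
  obtain ⟨K, hK⟩ := exists_map_submatrix_polarFrame (n := n) σ (by omega) hκ
  set γ := (matrixLebesgue m n).withDensity fun G => κ (Gᴴ * G)
  have h_posDef : ∀ᵐ G ∂γ, (Gᴴ * G).PosDef :=
    (withDensity_absolutelyContinuous _ _).ae_le (ae_posDef_gram_matrixLebesgue (by omega))
  have h_corner : γ Set.univ • ℙ.map (fun U => U.val.submatrix r c) =
      K • (matrixLebesgue p n).withDensity fun A => posSemidefDetPow
        (Fintype.card ↑(Set.range r)ᶜ - Fintype.card n) (1 - Aᴴ * A) := by
    rw [← hK, hσ]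
    exact smul_map_submatrix_eq_map_submatrix_polarFrame ℙ r c
      (fun U => measurePreserving_unitaryGroup_mul_withDensity_gram U hκ) h_posDef
  have h_mass : γ Set.univ = ∫⁻ G, κ (Gᴴ * G) ∂matrixLebesgue m n := by
    rw [withDensity_apply _ MeasurableSet.univ, Measure.restrict_univ]
  have h_prob : IsProbabilityMeasure (ℙ.map fun U => U.val.submatrix r c) :=
    Measure.isProbabilityMeasure_map (by fun_prop)
  obtain ⟨C, hC, h_law⟩ := exists_eq_ofReal_smul_of_isProbabilityMeasure
    (h_mass ▸ h_zero) (h_mass ▸ h_top) h_corner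
  refine ⟨C, hC, ?_⟩
  rw [h_law, ← withDensity_smul _ (by fun_prop), h_compl]
  congr 1
  funext A
  exact ofReal_mul_posSemidefDetPow hC.le _ _

end CornerDensity

/-- **The distribution of the corner of a Haar unitary matrix** (Collins).  Here `ℙ` is
the Haar probability measure on the `m × m` unitary group (the unique left-invariant
Borel probability measure).  For `m ≥ 2n`, the law of the upper-left `n × n` corner `A`
of a Haar unitary is absolutely continuous with respect to the Lebesgue measure, with
density `C(n,m) det(1 - A*A)^{m-2n}` on the set of contractions (described as the set
where `1 - AᴴA` is positive semidefinite) and zero elsewhere. -/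
theorem corner_of_haar_unitary_density
    (m n : ℕ) (hn : 1 ≤ n) (hmn : 2 * n ≤ m)
    (ℙ : Measure (Matrix.unitaryGroup (Fin m) ℂ))
    (hprob : IsProbabilityMeasure ℙ)
    (hinv : ∀ V : Matrix.unitaryGroup (Fin m) ℂ,
      Measure.map (fun U => V * U) ℙ = ℙ) :
    ∃ C : ℝ, 0 < C ∧
      Measure.map (fun U => truncation m n U.val) ℙ =
        (lebesgueMatrix n).withDensity
          (Set.indicator {A : Matrix (Fin n) (Fin n) ℂ | (1 - Aᴴ * A).PosSemidef}
            fun A => ENNReal.ofReal (C * ((1 - Aᴴ * A).det.re) ^ (m - 2 * n))) := by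
  have : ℙ.IsMulLeftInvariant := ⟨hinv⟩
  have hnm : n ≤ m := by omega
  have h_corner (U : Matrix (Fin m) (Fin m) ℂ) : truncation m n U =
      U.submatrix (Fin.castLEEmb hnm) (Fin.castLEEmb hnm) :=
    Matrix.ext fun i j => dif_pos ⟨i.2.trans_le hnm, j.2.trans_le hnm⟩
  have h_law := corner_of_haar_unitary_density_general ℙ (Fin.castLEEmb hnm) (Fin.castLEEmb hnm)
    (by simpa only [Fintype.card_fin, ← two_mul] using hmn)
  simp only [Fintype.card_fin, Nat.sub_sub, ← two_mul] at h_law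
  simp only [h_corner]
  exact h_law
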